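/- Let 𝔞 be a cofinite monomial ideal in k[x₁,…,x_d] and let c > d−1 be a real number. Then m(c) > 0 if and only if m(c+1) > 0; that is, c is a jumping number of 𝔞 if and only if c+1 is a jumping number of 𝔞. (Monomial case of Proposition 3.6: periodicity of jumping numbers beyond d−1.) -/

import Mathlib

open Set Filter Pointwise MeasureTheory

/-- The map sending a vector of natural number exponents to the corresponding
real vector. -/
noncomputable def expToReal (d : ℕ) (v : Fin d → ℕ) : Fin d → ℝ := fun i => (v i : ℝ)

/-- The Newton polyhedron of a monomial ideal with exponent set `S`:
the convex hull in `ℝ^d` of the exponent vectors. -/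
noncomputable def newtonPoly (d : ℕ) (S : Set (Fin d → ℕ)) : Set (Fin d → ℝ) :=
  convexHull ℝ (expToReal d '' S)

/-- The multiplicity `m(c)` of `c > 0` as a (candidate) jumping number of the monomial
ideal with exponent set `S`: the number of `v ∈ ℕ^d` with `v + 𝟏` on the boundary part
`c•P(𝔞) \ int(c•P(𝔞))` of the dilated Newton polyhedron. -/
noncomputable def multJump (d : ℕ) (S : Set (Fin d → ℕ)) (c : ℝ) : ℕ :=
  Nat.card {v : Fin d → ℕ |
    expToReal d v + 1 ∈ c • newtonPoly d S \ interior (c • newtonPoly d S)}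

section NewtonPolyhedron

variable {d : ℕ}

theorem expToReal_add (v w : Fin d → ℕ) :
    expToReal d (v + w) = expToReal d v + expToReal d w := by
  ext i
  simp [expToReal]

theorem expToReal_single (i : Fin d) (n : ℕ) :
    expToReal d (Pi.single i n) = (n : ℝ) • Pi.single i (1 : ℝ) := by
  ext j
  by_cases h : j = i
  · subst h
    simp [expToReal]
  · simp [expToReal, h]

theorem convex_newtonPoly (S : Set (Fin d → ℕ)) : Convex ℝ (newtonPoly d S) :=
  convex_convexHull ℝ _

theorem expToReal_mem_newtonPoly {S : Set (Fin d → ℕ)} {s : Fin d → ℕ} (hs : s ∈ S) :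
    expToReal d s ∈ newtonPoly d S :=
  subset_convexHull ℝ _ (mem_image_of_mem _ hs)

/-- The Newton polyhedron of a nonzero monomial ideal is full-dimensional. -/
theorem interior_newtonPoly_nonempty {S : Set (Fin d → ℕ)}
    (hS : ∀ v ∈ S, ∀ w : Fin d → ℕ, v + w ∈ S) (hne : S.Nonempty) :
    (interior (newtonPoly d S)).Nonempty := by
  obtain ⟨s, hs⟩ := hne
  rw [newtonPoly, interior_convexHull_nonempty_iff_affineSpan_eq_top]
  have hs' : expToReal d s ∈ affineSpan ℝ (expToReal d '' S) :=
    subset_affineSpan ℝ _ (mem_image_of_mem _ hs)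
  rw [← AffineSubspace.direction_eq_top_iff_of_nonempty ⟨_, hs'⟩, eq_top_iff,
    ← (Pi.basisFun ℝ (Fin d)).span_eq, Submodule.span_le]
  rintro _ ⟨i, rfl⟩
  have h := AffineSubspace.vsub_mem_direction
    (subset_affineSpan ℝ _ (mem_image_of_mem (expToReal d) (hS s hs (Pi.single i 1)))) hs'
  simpa [expToReal_add, expToReal_single] using h

/-- If a nonzero functional attains its minimum over a set at `x`, then `x` is not an
interior point of the set. -/
theorem notMem_interior_of_forall_le {E : Type*} [AddCommGroup E] [TopologicalSpace E]
    [IsTopologicalAddGroup E] [Module ℝ E] [ContinuousSMul ℝ E] {C : Set E} {x : E}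
    {f : E →L[ℝ] ℝ} (hf : f ≠ 0) (h : ∀ y ∈ C, f x ≤ f y) : x ∉ interior C := by
  intro hx
  have hnhds : f '' interior C ∈ nhds (f x) :=
    (f.isOpenMap_of_ne_zero hf _ isOpen_interior).mem_nhds (mem_image_of_mem f hx)
  obtain ⟨_, ⟨y, hy, rfl⟩, hlt⟩ := Filter.nonempty_of_mem
    (inter_mem (mem_nhdsWithin_of_mem_nhds hnhds) (self_mem_nhdsWithin (s := Iio (f x))))
  exact absurd (h y (interior_subset hy)) (not_le.2 hlt)

/-- A point of a convex set with nonempty interior that is not interior admits a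
supporting functional. -/
theorem exists_supporting_of_notMem_interior {E : Type*} [AddCommGroup E] [TopologicalSpace E]
    [IsTopologicalAddGroup E] [Module ℝ E] [ContinuousSMul ℝ E] {C : Set E} (hC : Convex ℝ C)
    (hne : (interior C).Nonempty) {x : E} (hx : x ∉ interior C) :
    ∃ f : E →L[ℝ] ℝ, f ≠ 0 ∧ ∀ y ∈ C, f x ≤ f y := by
  obtain ⟨f, hf⟩ := geometric_hahn_banach_point_open hC.interior isOpen_interior hx
  refine ⟨f, ?_, fun y hy => ?_⟩
  · rintro rfl
    obtain ⟨y, hy⟩ := hne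
    simpa using hf y hy
  · have hcl : y ∈ closure (interior C) := by
      rw [hC.closure_interior_eq_closure_of_nonempty_interior hne]
      exact subset_closure hy
    exact closure_minimal (fun z hz => (hf z hz).le)
      (isClosed_le continuous_const f.continuous) hcl

/-- Boundary points of a dilated Newton polyhedron are those of its points that admit a
supporting functional, tested on exponents only. -/
theorem mem_boundary_smul_newtonPoly_iff {S : Set (Fin d → ℕ)}
    (hS : ∀ v ∈ S, ∀ w : Fin d → ℕ, v + w ∈ S) (hne : S.Nonempty) {c : ℝ} (hc : 0 < c)
    {x : Fin d → ℝ} :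
    x ∈ c • newtonPoly d S \ interior (c • newtonPoly d S) ↔
      x ∈ c • newtonPoly d S ∧ ∃ f : (Fin d → ℝ) →L[ℝ] ℝ,
        f ≠ 0 ∧ ∀ s ∈ S, f x ≤ c * f (expToReal d s) := by
  refine and_congr_right fun _ => ⟨fun hx => ?_, ?_⟩
  · have hint : (interior (c • newtonPoly d S)).Nonempty := by
      rw [interior_smul₀ hc.ne']
      exact (interior_newtonPoly_nonempty hS hne).smul_set
    obtain ⟨f, hf, h⟩ :=
      exists_supporting_of_notMem_interior ((convex_newtonPoly S).smul c) hint hx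
    refine ⟨f, hf, fun s hs => ?_⟩
    simpa using h _ (smul_mem_smul_set (expToReal_mem_newtonPoly hs))
  · rintro ⟨f, hf, h⟩
    refine notMem_interior_of_forall_le hf ?_
    rintro _ ⟨p, hp, rfl⟩
    have hsub : newtonPoly d S ⊆ {p | f x ≤ (c • f) p} := by
      refine convexHull_min ?_ (convex_halfSpace_ge (c • f).toLinearMap.isLinear _)
      rintro _ ⟨s, hs, rfl⟩
      simpa using h s hs
    simpa using hsub hp

/-- A point of the dilated Newton polyhedron lying on a supporting hyperplane is a positive
combination of at most `d` exponents on that hyperplane. -/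
theorem exists_pos_combination_of_supporting {S : Set (Fin d → ℕ)} {c : ℝ} (hc : 0 < c)
    {x : Fin d → ℝ} (hx : x ∈ c • newtonPoly d S) {f : (Fin d → ℝ) →L[ℝ] ℝ} (hf : f ≠ 0)
    (h : ∀ s ∈ S, f x ≤ c * f (expToReal d s)) :
    ∃ (ι : Type) (_ : Fintype ι) (z : ι → Fin d → ℕ) (w : ι → ℝ),
      Fintype.card ι ≤ d ∧ (∀ i, z i ∈ S) ∧ (∀ i, 0 < w i) ∧ ∑ i, w i = c ∧
      ∑ i, w i • expToReal d (z i) = x ∧ ∀ i, f x = c * f (expToReal d (z i)) := by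
  obtain ⟨p, hp, rfl⟩ := hx
  obtain ⟨ι, hι, y, w, hy, hind, hw, hsum, hp⟩ := eq_pos_convex_span_of_mem_convexHull hp
  choose z hzS hz using fun i => hy (mem_range_self i)
  have hle : ∀ i, f p ≤ f (y i) := fun i => by
    have := h (z i) (hzS i)
    rw [hz] at this
    simpa [hc] using this
  have heq : ∀ i, f p = f (y i) := by
    have h0 : ∑ i, w i * (f (y i) - f p) = 0 := by
      simp_rw [mul_sub, Finset.sum_sub_distrib, ← Finset.sum_mul, hsum]
      rw [← hp]
      simp
    intro i
    have := (Finset.sum_eq_zero_iff_of_nonneg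
      (fun i _ => mul_nonneg (hw i).le (sub_nonneg.2 (hle i)))).1 h0 i (Finset.mem_univ i)
    rcases mul_eq_zero.1 this with h1 | h1
    · exact absurd h1 (hw i).ne'
    · linarith
  have hcard : Fintype.card ι ≤ d := by
    have hspan : vectorSpan ℝ (range y) ≤ LinearMap.ker f.toLinearMap := by
      rw [vectorSpan_def, Submodule.span_le]
      rintro _ ⟨_, ⟨i, rfl⟩, _, ⟨j, rfl⟩, rfl⟩
      simp [← heq]
    have hlt : Module.finrank ℝ (LinearMap.ker f.toLinearMap) < d := by
      have hne : LinearMap.ker f.toLinearMap ≠ ⊤ := by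
        rw [Ne, LinearMap.ker_eq_top]
        exact fun h0 => hf (ContinuousLinearMap.coe_injective h0)
      simpa using Submodule.finrank_lt hne
    have := hind.card_le_finrank_succ
    have := Submodule.finrank_mono hspan
    omega
  let e := Fintype.equivFin ι
  refine ⟨Fin (Fintype.card ι), inferInstance, z ∘ e.symm, fun i => c * w (e.symm i), by simpa,
    fun i => hzS _, fun i => mul_pos hc (hw _), ?_, ?_, fun i => ?_⟩
  · rw [e.symm.sum_comp (fun i => c * w i), ← Finset.mul_sum, hsum, mul_one]
  · simp only [Function.comp, hz]
    rw [e.symm.sum_comp (fun i => (c * w i) • y i)]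
    simp_rw [mul_smul, ← Finset.smul_sum, hp]
  · simp [hz, heq (e.symm i)]

theorem nonempty_of_finite_compl {S : Set (Fin d → ℕ)} (hd : 1 ≤ d) (hcof : Sᶜ.Finite) :
    S.Nonempty := by
  have : Nonempty (Fin d) := ⟨⟨0, hd⟩⟩
  rw [nonempty_iff_ne_empty]
  rintro rfl
  exact infinite_univ (by simpa using hcof)

/-- A cofinite monomial ideal contains a power of each variable. -/
theorem exists_single_mem_of_finite_compl {S : Set (Fin d → ℕ)} (hcof : Sᶜ.Finite)
    (i : Fin d) : ∃ n : ℕ, Pi.single i n ∈ S := by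
  by_contra! h
  exact infinite_of_injective_forall_mem (Pi.single_injective i) h hcof

/-- Only finitely many shifted exponents lie on the boundary of a dilated Newton polyhedron. -/
theorem finite_boundary_exponents {S : Set (Fin d → ℕ)} (hd : 1 ≤ d)
    (hS : ∀ v ∈ S, ∀ w : Fin d → ℕ, v + w ∈ S) (hcof : Sᶜ.Finite) {c : ℝ} (hc : 0 < c) :
    {v : Fin d → ℕ |
      expToReal d v + 1 ∈ c • newtonPoly d S \ interior (c • newtonPoly d S)}.Finite := by
  have hne := nonempty_of_finite_compl hd hcof
  choose N hN using exists_single_mem_of_finite_compl hcof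
  refine (finite_Iic (fun i => ⌊c * N i⌋₊)).subset fun v hv i => Nat.le_floor ?_
  obtain ⟨-, f, hf, h⟩ := (mem_boundary_smul_newtonPoly_iff hS hne hc).1 hv
  obtain ⟨s, hs⟩ := hne
  have happ : ∀ x, f x = ∑ j, x j * f (Pi.single j 1) := fun x => by
    conv_lhs => rw [pi_eq_sum_univ' x]
    simp
  have hnonneg : ∀ j, 0 ≤ f (Pi.single j 1) := fun j => by
    by_contra! hj
    obtain ⟨n, hn⟩ := Archimedean.arch
      (c * f (expToReal d s) - f (expToReal d v + 1) + 1) (y := c * -f (Pi.single j 1))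
      (by nlinarith)
    have := h _ (hS s hs (Pi.single j n))
    rw [expToReal_add, expToReal_single, map_add f (expToReal d s), map_smul,
      smul_eq_mul] at this
    rw [nsmul_eq_mul] at hn
    nlinarith
  have hterm : ∀ j, 0 ≤ (expToReal d v + 1) j * f (Pi.single j 1) := fun j =>
    mul_nonneg (by simp only [expToReal, Pi.add_apply, Pi.one_apply]; positivity) (hnonneg j)
  have hbound : ∀ j, (v j + 1 : ℝ) * f (Pi.single j 1) ≤ f (expToReal d v + 1) := fun j => by
    rw [happ (expToReal d v + 1)]
    exact Finset.single_le_sum (fun j _ => hterm j) (Finset.mem_univ j)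
  have hi := h _ (hN i)
  rw [expToReal_single, map_smul, smul_eq_mul] at hi
  have hpos : 0 < f (Pi.single i 1) := by
    refine (hnonneg i).lt_of_ne' fun h0 => hf ?_
    rw [h0, mul_zero, mul_zero] at hi
    have hz : ∀ j, f (Pi.single j 1) = 0 := fun j => by
      have hv : (0 : ℝ) < v j + 1 := by positivity
      nlinarith [hbound j, hnonneg j]
    ext x
    simp [happ x, hz]
  have : (v i + 1 : ℝ) ≤ c * N i :=
    le_of_mul_le_mul_right (by linarith [hbound i]) hpos
  linarith

theorem multJump_pos_iff {S : Set (Fin d → ℕ)} (hd : 1 ≤ d)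
    (hS : ∀ v ∈ S, ∀ w : Fin d → ℕ, v + w ∈ S) (hcof : Sᶜ.Finite) {c : ℝ} (hc : 0 < c) :
    0 < multJump d S c ↔ ∃ v : Fin d → ℕ, expToReal d v + 1 ∈ c • newtonPoly d S ∧
      ∃ f : (Fin d → ℝ) →L[ℝ] ℝ,
        f ≠ 0 ∧ ∀ s ∈ S, f (expToReal d v + 1) ≤ c * f (expToReal d s) := by
  have hfin := finite_boundary_exponents hd hS hcof hc
  rw [multJump, Nat.card_coe_set_eq, Set.ncard_pos hfin]
  exact exists_congr fun v =>
    mem_boundary_smul_newtonPoly_iff hS (nonempty_of_finite_compl hd hcof) hc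

/-- A positive combination of exponents with total weight `c` lies in `c • P`. -/
theorem sum_smul_mem_smul_newtonPoly {S : Set (Fin d → ℕ)} {ι : Type*} [Fintype ι]
    {z : ι → Fin d → ℕ} {w : ι → ℝ} {c : ℝ} (hc : 0 < c) (hz : ∀ i, z i ∈ S)
    (hw : ∀ i, 0 ≤ w i) (hsum : ∑ i, w i = c) :
    ∑ i, w i • expToReal d (z i) ∈ c • newtonPoly d S := by
  rw [mem_smul_set_iff_inv_smul_mem₀ hc.ne', Finset.smul_sum]
  simp_rw [smul_smul]
  refine (convex_newtonPoly S).sum_mem (fun i _ => mul_nonneg (inv_nonneg.2 hc.le) (hw i)) ?_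
    fun i _ => expToReal_mem_newtonPoly (hz i)
  rw [← Finset.mul_sum, hsum, inv_mul_cancel₀ hc.ne']

end NewtonPolyhedron

/-- Monomial case of Proposition 3.6: for a cofinite monomial ideal and `c > d - 1`,
`c` is a jumping number iff `c + 1` is a jumping number. -/
theorem jumping_numbers_periodic (d : ℕ) (hd : 1 ≤ d) (k : Type*) [Field k]
    (S : Set (Fin d → ℕ)) (hS : ∀ v ∈ S, ∀ w : Fin d → ℕ, v + w ∈ S)
    (hcof : (Sᶜ : Set (Fin d → ℕ)).Finite)
    (c : ℝ) (hc : (d : ℝ) - 1 < c) :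
    0 < multJump d S c ↔ 0 < multJump d S (c + 1) := by
  have hd' : (1 : ℝ) ≤ d := by exact_mod_cast hd
  have hc0 : 0 < c := by linarith
  have hc1 : 0 < c + 1 := by linarith
  rw [multJump_pos_iff hd hS hcof hc0, multJump_pos_iff hd hS hcof hc1]
  constructor
  · rintro ⟨v, hv, f, hf, h⟩
    obtain ⟨ι, _, z, w, -, hz, hw, hsum, -, heq⟩ :=
      exists_pos_combination_of_supporting hc0 hv hf h
    obtain ⟨i⟩ : Nonempty ι := by
      by_contra! hempty
      simp only [Finset.univ_eq_empty, Finset.sum_empty] at hsum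
      exact hc0.ne hsum
    have hadd : expToReal d (v + z i) + 1 = (expToReal d v + 1) + expToReal d (z i) := by
      rw [expToReal_add, add_right_comm]
    refine ⟨v + z i, ?_, f, hf, fun s hs => ?_⟩
    · rw [hadd, (convex_newtonPoly S).add_smul hc0.le zero_le_one, one_smul]
      exact add_mem_add hv (expToReal_mem_newtonPoly (hz i))
    · have hs' := h s hs
      have hle : f (expToReal d (z i)) ≤ f (expToReal d s) :=
        le_of_mul_le_mul_left ((heq i).symm.le.trans hs') hc0
      rw [hadd, map_add f]
      linarith
  · rintro ⟨u, hu, f, hf, h⟩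
    obtain ⟨ι, _, z, w, hcard, hz, hw, hsum, hcomb, heq⟩ :=
      exists_pos_combination_of_supporting hc1 hu hf h
    obtain ⟨i, hi⟩ : ∃ i, 1 < w i := by
      by_contra! hle
      have h1 : ∑ i, w i ≤ Fintype.card ι := by
        simpa using Finset.sum_le_sum fun i (_ : i ∈ Finset.univ) => hle i
      have h2 : (Fintype.card ι : ℝ) ≤ d := by exact_mod_cast hcard
      linarith
    classical
    let w' : ι → ℝ := w - Pi.single i 1
    have hw' : ∀ j, 0 < w' j := fun j => by
      by_cases hj : j = i
      · subst hj
        simpa [w'] using hi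
      · simpa [w', hj] using hw j
    have hsum' : ∑ j, w' j = c := by
      simp [w', Finset.sum_sub_distrib, hsum]
    have hcomb' : ∑ j, w' j • expToReal d (z j) = expToReal d u + 1 - expToReal d (z i) := by
      rw [← hcomb]
      simp [w', sub_smul, Finset.sum_sub_distrib, Pi.single_apply, ite_smul]
    have hlt : ∀ l, z i l < u l + 1 := fun l => by
      have hcoord : ∀ a : ι → ℝ, (∑ j, a j • expToReal d (z j)) l = ∑ j, a j * z j l :=
        fun a => by simp [expToReal]
      obtain ⟨j, hj⟩ : ∃ j, 0 < z j l := by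
        by_contra! h0
        have hl := congrFun hcomb l
        rw [hcoord] at hl
        have hul : (0 : ℝ) < u l + 1 := by positivity
        simp [expToReal, Nat.le_zero.1 (h0 _)] at hl
        linarith
      have hpos : 0 < ∑ j, w' j * z j l :=
        Finset.sum_pos' (fun j _ => mul_nonneg (hw' j).le (Nat.cast_nonneg _))
          ⟨j, Finset.mem_univ j, mul_pos (hw' j) (by exact_mod_cast hj)⟩
      rw [← hcoord, hcomb'] at hpos
      simp only [expToReal, Pi.sub_apply, Pi.add_apply, Pi.one_apply, sub_pos] at hpos
      exact_mod_cast hpos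
    have hsub : expToReal d (u - z i) + 1 = expToReal d u + 1 - expToReal d (z i) := by
      ext l
      simp only [expToReal, Pi.sub_apply, Pi.add_apply, Pi.one_apply]
      rw [Nat.cast_sub (Nat.lt_succ_iff.1 (hlt l))]
      ring
    refine ⟨u - z i, ?_, f, hf, fun s hs => ?_⟩
    · rw [hsub, ← hcomb']
      exact sum_smul_mem_smul_newtonPoly hc0 hz (fun j => (hw' j).le) hsum'
    · have hle : f (expToReal d (z i)) ≤ f (expToReal d s) :=
        le_of_mul_le_mul_left ((heq i).symm.le.trans (h s hs)) hc1
      have := mul_le_mul_of_nonneg_left hle hc0.le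
      rw [hsub, map_sub f, heq i]
      linarith
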